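/- arXiv:1107.4390 — 9 statements merged into one kernel-verified Lean document; each statement's English description precedes it below -/
import Mathlib

section
/- Let T ≥ 1, let A be a T×T real matrix with 0 ≤ A_{rs} < ∞ for all r,s, let γ ≥ 0, and let Σ be the T×T diagonal matrix with diagonal entries Σ_{tt} = σ_t²/N_t satisfying 0 < σ_t²/N_t < ∞ for all t. Then the matrix B = I + (γ/T) Σ L(A) is invertible, i.e. the MTA solution matrix W = (I + (γ/T) Σ L(A))⁻¹ exists. -/
open Matrix BigOperators

/-- Graph Laplacian `L(A) = D - A` where `D` is the diagonal matrix of row sums. -/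
noncomputable def graphLaplacian {T : ℕ} (A : Matrix (Fin T) (Fin T) ℝ) :
    Matrix (Fin T) (Fin T) ℝ :=
  Matrix.diagonal (fun t => ∑ s, A t s) - A

/-- The MTA solution matrix `W = (I + (γ/T) Σ L(A))⁻¹` exists, i.e. the matrix
`B = I + (γ/T) Σ L(A)` is invertible. -/
theorem mta_solution_matrix_exists (T : ℕ) (hT : 1 ≤ T)
    (A : Matrix (Fin T) (Fin T) ℝ) (hA : ∀ r s, 0 ≤ A r s)
    (γ : ℝ) (hγ : 0 ≤ γ)
    (σ : Fin T → ℝ) (N : Fin T → ℕ)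
    (hSig : ∀ t, 0 < σ t ^ 2 / (N t : ℝ)) :
    IsUnit ((1 : Matrix (Fin T) (Fin T) ℝ) +
      (γ / (T : ℝ)) •
        (Matrix.diagonal (fun t => σ t ^ 2 / (N t : ℝ)) * graphLaplacian A)) := by
  rw [Matrix.isUnit_iff_isUnit_det, isUnit_iff_ne_zero]
  refine det_ne_zero_of_sum_row_lt_diag fun k => ?_
  set c : ℝ := γ / T * (σ k ^ 2 / N k) with hc
  have hc0 : 0 ≤ c := mul_nonneg (by positivity) (hSig k).le
  have off_diag : ∀ j ∈ Finset.univ.erase k,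
      ‖((1 : Matrix (Fin T) (Fin T) ℝ) + (γ / (T : ℝ)) •
        (Matrix.diagonal (fun t => σ t ^ 2 / (N t : ℝ)) * graphLaplacian A)) k j‖ =
        c * A k j := by
    intro j hj
    have hkj : k ≠ j := (Finset.ne_of_mem_erase hj).symm
    simp only [graphLaplacian, Matrix.add_apply, Matrix.one_apply_ne hkj, Matrix.smul_apply,
      Matrix.diagonal_mul, Matrix.sub_apply, Matrix.diagonal_apply_ne _ hkj, smul_eq_mul,
      zero_add, zero_sub, mul_neg, norm_neg, ← mul_assoc, ← hc]
    exact Real.norm_of_nonneg (mul_nonneg hc0 (hA k j))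
  rw [Finset.sum_congr rfl off_diag, ← Finset.mul_sum]
  refine lt_of_lt_of_le ?_ (Real.le_norm_self _)
  simp only [graphLaplacian, Matrix.add_apply, Matrix.one_apply_eq, Matrix.smul_apply,
    Matrix.diagonal_mul, Matrix.sub_apply, Matrix.diagonal_apply_eq, smul_eq_mul,
    ← mul_assoc, ← hc, ← Finset.sum_erase_eq_sub (Finset.mem_univ k)]
  exact lt_one_add _
end

section
/- Let T ≥ 1, let A be a T×T real matrix with nonnegative entries, let γ ≥ 0, and let Σ be the T×T diagonal matrix with positive diagonal entries Σ_{tt} = σ_t²/N_t. Then the MTA solution matrix W = (I + (γ/T) Σ L(A))⁻¹ has all entries nonnegative, i.e. W_{rs} ≥ 0 for all r,s. -/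
open Matrix BigOperators

/-- If `1 + diag(d) L(A)` maps `x` to a nonnegative vector, then `x` is nonnegative: compare at an
index where `x` is minimal. -/
theorem nonneg_of_one_add_diagonal_mul_graphLaplacian_mulVec_nonneg {T : ℕ}
    {A : Matrix (Fin T) (Fin T) ℝ} (hA : ∀ r s, 0 ≤ A r s) {d : Fin T → ℝ} (hd : ∀ t, 0 ≤ d t)
    {x : Fin T → ℝ} (hx : 0 ≤ (1 + Matrix.diagonal d * graphLaplacian A) *ᵥ x) : 0 ≤ x := by
  intro t
  obtain ⟨r, -, hr⟩ := Finset.exists_min_image Finset.univ x ⟨t, Finset.mem_univ t⟩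
  refine le_trans ?_ (hr t (Finset.mem_univ t))
  have hentry : ((1 + Matrix.diagonal d * graphLaplacian A) *ᵥ x) r
      = x r + d r * ∑ s, A r s * (x r - x s) := by
    rw [Matrix.add_mulVec, Matrix.one_mulVec, ← Matrix.mulVec_mulVec, Pi.add_apply,
      Matrix.mulVec_diagonal, graphLaplacian, Matrix.sub_mulVec, Pi.sub_apply,
      Matrix.mulVec_diagonal]
    simp only [Matrix.mulVec, dotProduct, mul_sub, Finset.sum_sub_distrib, Finset.sum_mul]
  have hsum : ∑ s, A r s * (x r - x s) ≤ 0 := Finset.sum_nonpos fun s _ =>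
    mul_nonpos_of_nonneg_of_nonpos (hA r s) (sub_nonpos.mpr (hr s (Finset.mem_univ s)))
  have hrow := hx r
  rw [hentry] at hrow
  simp only [Pi.zero_apply] at hrow ⊢
  linarith [mul_nonpos_of_nonneg_of_nonpos (hd r) hsum]

/-- A square real matrix `M` such that `M x ≥ 0` implies `x ≥ 0` is invertible with entrywise
nonnegative inverse. -/
theorem Matrix.isUnit_and_inv_nonneg_of_mulVec_nonneg_imp {n : Type*} [Fintype n] [DecidableEq n]
    {M : Matrix n n ℝ} (hM : ∀ x : n → ℝ, 0 ≤ M *ᵥ x → 0 ≤ x) :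
    IsUnit M ∧ ∀ r s, 0 ≤ M⁻¹ r s := by
  have hunit : IsUnit M := by
    rw [← Matrix.mulVec_injective_iff_isUnit]
    intro x y hxy
    have hxy : M *ᵥ x = M *ᵥ y := hxy
    apply le_antisymm
    · exact sub_nonneg.mp (hM (y - x) (by rw [Matrix.mulVec_sub, hxy, sub_self]))
    · exact sub_nonneg.mp (hM (x - y) (by rw [Matrix.mulVec_sub, hxy, sub_self]))
  refine ⟨hunit, fun r s => ?_⟩
  have hcol : 0 ≤ M⁻¹ *ᵥ Pi.single s 1 := by
    apply hM
    rw [Matrix.mulVec_mulVec, Matrix.mul_nonsing_inv M ((Matrix.isUnit_iff_isUnit_det M).mp hunit),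
      Matrix.one_mulVec]
    exact Pi.single_nonneg.mpr zero_le_one
  simpa using hcol r

/-- The MTA solution matrix `W = (I + (γ/T) Σ L(A))⁻¹` exists and has all
entries nonnegative. -/
theorem mta_solution_matrix_nonneg (T : ℕ) (hT : 1 ≤ T)
    (A : Matrix (Fin T) (Fin T) ℝ) (hA : ∀ r s, 0 ≤ A r s)
    (γ : ℝ) (hγ : 0 ≤ γ)
    (σ : Fin T → ℝ) (N : Fin T → ℕ)
    (hSig : ∀ t, 0 < σ t ^ 2 / (N t : ℝ)) :
    IsUnit ((1 : Matrix (Fin T) (Fin T) ℝ) +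
      (γ / (T : ℝ)) •
        (Matrix.diagonal (fun t => σ t ^ 2 / (N t : ℝ)) * graphLaplacian A)) ∧
    ∀ r s : Fin T,
      0 ≤ ((1 : Matrix (Fin T) (Fin T) ℝ) +
        (γ / (T : ℝ)) •
          (Matrix.diagonal (fun t => σ t ^ 2 / (N t : ℝ)) * graphLaplacian A))⁻¹ r s := by
  apply Matrix.isUnit_and_inv_nonneg_of_mulVec_nonneg_imp
  intro x hx
  rw [← Matrix.smul_mul, ← Matrix.diagonal_smul] at hx
  exact nonneg_of_one_add_diagonal_mul_graphLaplacian_mulVec_nonneg hA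
    (fun t => mul_nonneg (div_nonneg hγ T.cast_nonneg) (hSig t).le) hx
end

section
/- Let T ≥ 1, let A be a T×T real matrix with 0 ≤ A_{rs} < ∞ for all r,s, let γ ≥ 0, and let Σ be the T×T diagonal matrix with 0 < Σ_{tt} = σ_t²/N_t < ∞ for all t. Then the MTA solution matrix W = (I + (γ/T) Σ L(A))⁻¹ is right-stochastic: all its entries are nonnegative and each row sums to 1. Consequently, for any vector Ȳ ∈ ℝ^T of task sample averages, each MTA estimate Y*_t = Σ_{r=1}^T W_{tr} Ȳ_r is a convex combination of the sample averages Ȳ_1, …, Ȳ_T. -/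
open Matrix BigOperators

theorem one_add_smul_diagonal_mul_graphLaplacian_mulVec {T : ℕ} (A : Matrix (Fin T) (Fin T) ℝ)
    (c : ℝ) (d x : Fin T → ℝ) (t : Fin T) :
    ((1 + c • (Matrix.diagonal d * graphLaplacian A)) *ᵥ x) t =
      x t + c * d t * ∑ s, A t s * (x t - x s) := by
  rw [Matrix.add_mulVec, Matrix.one_mulVec, Matrix.smul_mulVec, ← Matrix.mulVec_mulVec,
    graphLaplacian, Matrix.sub_mulVec]
  simp only [Pi.add_apply, Pi.smul_apply, Pi.sub_apply, Matrix.mulVec_diagonal, smul_eq_mul,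
    mul_sub, Finset.sum_sub_distrib, ← Finset.sum_mul]
  simp only [Matrix.mulVec, dotProduct]
  ring

/-- Minimum principle: evaluate at a coordinate where `x` is minimal. -/
theorem nonneg_of_one_add_smul_diagonal_mul_graphLaplacian_mulVec_nonneg {T : ℕ}
    {A : Matrix (Fin T) (Fin T) ℝ} (hA : ∀ r s, 0 ≤ A r s) {c : ℝ} (hc : 0 ≤ c)
    {d : Fin T → ℝ} (hd : ∀ t, 0 ≤ d t) {x : Fin T → ℝ}
    (hx : 0 ≤ (1 + c • (Matrix.diagonal d * graphLaplacian A)) *ᵥ x) : 0 ≤ x := by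
  intro r
  have : Nonempty (Fin T) := ⟨r⟩
  obtain ⟨t, ht⟩ := Finite.exists_min x
  have h := hx t
  rw [one_add_smul_diagonal_mul_graphLaplacian_mulVec] at h
  have hsum : ∑ s, A t s * (x t - x s) ≤ 0 :=
    Finset.sum_nonpos fun s _ =>
      mul_nonpos_of_nonneg_of_nonpos (hA t s) (sub_nonpos.mpr (ht s))
  have hprod := mul_nonpos_of_nonneg_of_nonpos (mul_nonneg hc (hd t)) hsum
  simp only [Pi.zero_apply] at h ⊢
  linarith [ht r]

theorem isUnit_one_add_smul_diagonal_mul_graphLaplacian {T : ℕ}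
    {A : Matrix (Fin T) (Fin T) ℝ} (hA : ∀ r s, 0 ≤ A r s) {c : ℝ} (hc : 0 ≤ c)
    {d : Fin T → ℝ} (hd : ∀ t, 0 ≤ d t) :
    IsUnit (1 + c • (Matrix.diagonal d * graphLaplacian A)) := by
  rw [← Matrix.mulVec_injective_iff_isUnit]
  have key : ∀ x y : Fin T → ℝ, (1 + c • (Matrix.diagonal d * graphLaplacian A)) *ᵥ x =
      (1 + c • (Matrix.diagonal d * graphLaplacian A)) *ᵥ y → y ≤ x := fun x y hxy =>
    sub_nonneg.mp <| nonneg_of_one_add_smul_diagonal_mul_graphLaplacian_mulVec_nonneg hA hc hd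
      (by rw [Matrix.mulVec_sub, hxy, sub_self])
  exact fun x y hxy => le_antisymm (key y x hxy.symm) (key x y hxy)

/-- The MTA solution matrix `W = (I + (γ/T) Σ L(A))⁻¹` is right-stochastic:
entries nonnegative, rows summing to 1.  Consequently each MTA estimate
`Y*_t = ∑ r, W t r * Ȳ r` is a convex combination of the sample averages. -/
theorem mta_solution_matrix_right_stochastic (T : ℕ) (hT : 1 ≤ T)
    (A : Matrix (Fin T) (Fin T) ℝ) (hA : ∀ r s, 0 ≤ A r s)
    (γ : ℝ) (hγ : 0 ≤ γ)
    (σ : Fin T → ℝ) (N : Fin T → ℕ)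
    (hSig : ∀ t, 0 < σ t ^ 2 / (N t : ℝ))
    (W : Matrix (Fin T) (Fin T) ℝ)
    (hW : W = ((1 : Matrix (Fin T) (Fin T) ℝ) +
      (γ / (T : ℝ)) •
        (Matrix.diagonal (fun t => σ t ^ 2 / (N t : ℝ)) * graphLaplacian A))⁻¹) :
    (∀ r s : Fin T, 0 ≤ W r s) ∧
    (∀ t : Fin T, ∑ s, W t s = 1) ∧
    (∀ (Ybar : Fin T → ℝ) (t : Fin T), ∃ w : Fin T → ℝ,
      (∀ r, 0 ≤ w r) ∧ (∑ r, w r = 1) ∧ (∑ r, W t r * Ybar r) = ∑ r, w r * Ybar r) := by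
  have hc : 0 ≤ γ / (T : ℝ) := by positivity
  have hd : ∀ t, 0 ≤ σ t ^ 2 / (N t : ℝ) := fun t => (hSig t).le
  have hdet := (Matrix.isUnit_iff_isUnit_det _).mp
    (isUnit_one_add_smul_diagonal_mul_graphLaplacian hA hc hd)
  have hnonneg : ∀ r s : Fin T, 0 ≤ W r s := by
    intro r s
    have hcol : 0 ≤ W *ᵥ Pi.single s 1 := by
      apply nonneg_of_one_add_smul_diagonal_mul_graphLaplacian_mulVec_nonneg hA hc hd
      rw [hW, Matrix.mulVec_mulVec, Matrix.mul_nonsing_inv _ hdet, Matrix.one_mulVec]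
      exact Pi.single_nonneg.mpr zero_le_one
    simpa using hcol r
  have hsum : ∀ t : Fin T, ∑ s, W t s = 1 := by
    have hone : (1 + (γ / (T : ℝ)) •
        (Matrix.diagonal (fun t => σ t ^ 2 / (N t : ℝ)) * graphLaplacian A)) *ᵥ 1 = 1 := by
      ext t
      simp [one_add_smul_diagonal_mul_graphLaplacian_mulVec]
    have hW1 : W *ᵥ 1 = 1 := by
      conv_lhs => rw [← hone]
      rw [hW, Matrix.mulVec_mulVec, Matrix.nonsing_inv_mul _ hdet, Matrix.one_mulVec]
    intro t
    simpa [Matrix.mulVec, dotProduct] using congrFun hW1 t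
  exact ⟨hnonneg, hsum, fun _ t => ⟨W t, hnonneg t, hsum t, rfl⟩⟩
end

section
/- Let Ȳ_1 and Ȳ_2 be independent real random variables with E[Ȳ_1] = μ_1, Var(Ȳ_1) = σ_1²/N_1, E[Ȳ_2] = μ_2 = μ_1 + Δ, and Var(Ȳ_2) = σ_2²/N_2, where σ_1², σ_2² > 0 and N_1, N_2 ≥ 1. With T = 2 and a ≥ 0, define Y*_1 = [(T + (σ_2²/N_2) a) Ȳ_1 + (σ_1²/N_1) a Ȳ_2] / (T + (σ_1²/N_1) a + (σ_2²/N_2) a). Then the mean squared error satisfies E[(Y*_1 − μ_1)²] = (σ_1²/N_1) · [T² + 2T(σ_2²/N_2)a + (σ_1²σ_2²/(N_1 N_2))a² + (σ_2⁴/N_2²)a²] / (T + (σ_1²/N_1)a + (σ_2²/N_2)a)² + Δ² (σ_1⁴/N_1²) a² / (T + (σ_1²/N_1)a + (σ_2²/N_2)a)². -/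
open MeasureTheory ProbabilityTheory

/-- Bias-variance decomposition of the mean squared error of a linear combination of two
independent square-integrable random variables. -/
theorem integral_sq_linear_comb_sub_const {Ω : Type*} [MeasurableSpace Ω] {P : Measure Ω}
    [IsProbabilityMeasure P] {X Y : Ω → ℝ} (hXY : IndepFun X Y P)
    (hX : MemLp X 2 P) (hY : MemLp Y 2 P) (p q c : ℝ) :
    ∫ ω, (p * X ω + q * Y ω - c) ^ 2 ∂P =
      p ^ 2 * variance X P + q ^ 2 * variance Y P +
        (p * ∫ ω, X ω ∂P + q * ∫ ω, Y ω ∂P - c) ^ 2 := by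
  have hpX : MemLp (fun ω => p * X ω) 2 P := hX.const_mul p
  have hqY : MemLp (fun ω => q * Y ω) 2 P := hY.const_mul q
  have hsum : MemLp (fun ω => p * X ω + q * Y ω) 2 P := hpX.add hqY
  have hind : IndepFun (fun ω => p * X ω) (fun ω => q * Y ω) P :=
    hXY.comp (measurable_const_mul p) (measurable_const_mul q)
  have hvar : variance (fun ω => p * X ω + q * Y ω - c) P =
      p ^ 2 * variance X P + q ^ 2 * variance Y P := by
    rw [variance_sub_const hsum.aestronglyMeasurable,
      ← variance_const_mul, ← variance_const_mul]
    exact hind.variance_add hpX hqY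
  have hmean : ∫ ω, (p * X ω + q * Y ω - c) ∂P =
      p * ∫ ω, X ω ∂P + q * ∫ ω, Y ω ∂P - c := by
    rw [integral_sub (hsum.integrable one_le_two) (integrable_const c),
      integral_add (hpX.integrable one_le_two) (hqY.integrable one_le_two),
      integral_const_mul, integral_const_mul]
    simp
  have hdecomp := variance_eq_sub (hsum.sub (memLp_const c))
  simp only [Pi.sub_def, Pi.pow_def] at hdecomp
  rw [hvar, hmean] at hdecomp
  linarith

/-- MSE of the first two-task MTA estimate: with `T = 2` and task-similarity `a`,
`E[(Y*₁ − μ₁)²]` equals the stated closed-form expression. -/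
theorem mta_two_task_mse (a : ℝ) (ha : 0 ≤ a)
    {Ω : Type*} [MeasureSpace Ω] [IsProbabilityMeasure (volume : Measure Ω)]
    (Y1 Y2 : Ω → ℝ)
    (hIndep : IndepFun Y1 Y2)
    (hInt1 : Integrable Y1) (hInt2 : Integrable Y2)
    (hSq1 : Integrable (fun ω => Y1 ω ^ 2)) (hSq2 : Integrable (fun ω => Y2 ω ^ 2))
    (μ1 μ2 Δ : ℝ) (σ1 σ2 : ℝ) (N1 N2 : ℕ)
    (hσ1 : 0 < σ1 ^ 2) (hσ2 : 0 < σ2 ^ 2) (hN1 : 1 ≤ N1) (hN2 : 1 ≤ N2)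
    (hμ1 : μ1 = ∫ ω, Y1 ω) (hμ2 : μ2 = ∫ ω, Y2 ω) (hΔ : μ2 = μ1 + Δ)
    (hVar1 : (∫ ω, (Y1 ω - μ1) ^ 2) = σ1 ^ 2 / (N1 : ℝ))
    (hVar2 : (∫ ω, (Y2 ω - μ2) ^ 2) = σ2 ^ 2 / (N2 : ℝ))
    (T : ℝ) (hT : T = 2)
    (Ystar1 : Ω → ℝ)
    (hYstar1 : Ystar1 = fun ω =>
      ((T + (σ2 ^ 2 / (N2 : ℝ)) * a) * Y1 ω + (σ1 ^ 2 / (N1 : ℝ)) * a * Y2 ω) /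
        (T + (σ1 ^ 2 / (N1 : ℝ)) * a + (σ2 ^ 2 / (N2 : ℝ)) * a)) :
    (∫ ω, (Ystar1 ω - μ1) ^ 2) =
      (σ1 ^ 2 / (N1 : ℝ)) *
        ((T ^ 2 + 2 * T * (σ2 ^ 2 / (N2 : ℝ)) * a +
            (σ1 ^ 2 * σ2 ^ 2 / ((N1 : ℝ) * (N2 : ℝ))) * a ^ 2 +
            (σ2 ^ 4 / (N2 : ℝ) ^ 2) * a ^ 2) /
          (T + (σ1 ^ 2 / (N1 : ℝ)) * a + (σ2 ^ 2 / (N2 : ℝ)) * a) ^ 2) +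
      Δ ^ 2 * (σ1 ^ 4 / (N1 : ℝ) ^ 2) * a ^ 2 /
        (T + (σ1 ^ 2 / (N1 : ℝ)) * a + (σ2 ^ 2 / (N2 : ℝ)) * a) ^ 2 := by
  have hX : MemLp Y1 2 := (memLp_two_iff_integrable_sq hInt1.aestronglyMeasurable).2 hSq1
  have hY : MemLp Y2 2 := (memLp_two_iff_integrable_sq hInt2.aestronglyMeasurable).2 hSq2
  have hv1 : variance Y1 volume = σ1 ^ 2 / (N1 : ℝ) := by
    rw [variance_eq_integral hInt1.aemeasurable, ← hμ1, hVar1]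
  have hv2 : variance Y2 volume = σ2 ^ 2 / (N2 : ℝ) := by
    rw [variance_eq_integral hInt2.aemeasurable, ← hμ2, hVar2]
  have hσ4 : σ1 ^ 4 / (N1 : ℝ) ^ 2 = (σ1 ^ 2 / (N1 : ℝ)) ^ 2 := by ring
  have hσ4' : σ2 ^ 4 / (N2 : ℝ) ^ 2 = (σ2 ^ 2 / (N2 : ℝ)) ^ 2 := by ring
  have hσσ : σ1 ^ 2 * σ2 ^ 2 / ((N1 : ℝ) * (N2 : ℝ)) =
      (σ1 ^ 2 / (N1 : ℝ)) * (σ2 ^ 2 / (N2 : ℝ)) := mul_div_mul_comm _ _ _ _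
  have hD : 0 < T + (σ1 ^ 2 / (N1 : ℝ)) * a + (σ2 ^ 2 / (N2 : ℝ)) * a := by
    rw [hT]; positivity
  rw [hσ4, hσ4', hσσ, hYstar1]
  generalize σ1 ^ 2 / (N1 : ℝ) = v at *
  generalize σ2 ^ 2 / (N2 : ℝ) = w at *
  generalize hD_eq : T + v * a + w * a = D at hD ⊢
  have hmse := integral_sq_linear_comb_sub_const hIndep hX hY
    ((T + w * a) / D) (v * a / D) μ1
  have hbias : (T + w * a) / D * μ1 + v * a / D * (μ1 + Δ) - μ1 = v * a * Δ / D := by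
    field_simp
    rw [← hD_eq]
    ring
  rw [hv1, hv2, ← hμ1, ← hμ2, hΔ, hbias] at hmse
  simp only [add_div _ _ D, mul_div_right_comm _ (Y1 _), mul_div_right_comm _ (Y2 _)] at hmse ⊢
  rw [hmse]
  ring
end

section
/- Let T = 2, a > 0, σ_1², σ_2² > 0, N_1, N_2 ≥ 1, and Δ ∈ ℝ. Define M_1(a) = (σ_1²/N_1) · [T² + 2T(σ_2²/N_2)a + (σ_1²σ_2²/(N_1 N_2))a² + (σ_2⁴/N_2²)a²] / (T + (σ_1²/N_1)a + (σ_2²/N_2)a)² + Δ² (σ_1⁴/N_1²) a² / (T + (σ_1²/N_1)a + (σ_2²/N_2)a)². If Δ² < 4/a + σ_1²/N_1 + σ_2²/N_2, then M_1(a) < σ_1²/N_1. That is, the MTA estimate of the first mean has lower mean squared error than the sample average estimate whenever the squared mean-separation Δ² is small compared to 4/a plus the summed variances of the sample means. -/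
/-- The two-task MTA mean squared error, written in the variances `u`, `v` of the two sample means,
differs from the sample-average error `u` by a multiple of `4 / a + u + v - Δ ^ 2`. -/
lemma mta_two_task_mse_eq_sub {a u v : ℝ} (ha : 0 < a) (hu : 0 < u) (hv : 0 < v) (Δ : ℝ) :
    u * ((2 ^ 2 + 2 * 2 * v * a + u * v * a ^ 2 + v ^ 2 * a ^ 2) / (2 + u * a + v * a) ^ 2) +
        Δ ^ 2 * u ^ 2 * a ^ 2 / (2 + u * a + v * a) ^ 2 =
      u - u ^ 2 * a ^ 2 * (4 / a + u + v - Δ ^ 2) / (2 + u * a + v * a) ^ 2 := by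
  have hD : 2 + u * a + v * a ≠ 0 := by positivity
  field_simp
  ring

/-- If `Δ² < 4/a + σ₁²/N₁ + σ₂²/N₂`, then the two-task MTA estimate of the first
mean has lower MSE than the single-task sample average: `M₁(a) < σ₁²/N₁`. -/
theorem mta_two_task_mse_improvement (a : ℝ) (ha : 0 < a)
    (σ1 σ2 : ℝ) (hσ1 : 0 < σ1 ^ 2) (hσ2 : 0 < σ2 ^ 2)
    (N1 N2 : ℕ) (hN1 : 1 ≤ N1) (hN2 : 1 ≤ N2)
    (Δ : ℝ) (T : ℝ) (hT : T = 2)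
    (M1 : ℝ)
    (hM1 : M1 =
      (σ1 ^ 2 / (N1 : ℝ)) *
        ((T ^ 2 + 2 * T * (σ2 ^ 2 / (N2 : ℝ)) * a +
            (σ1 ^ 2 * σ2 ^ 2 / ((N1 : ℝ) * (N2 : ℝ))) * a ^ 2 +
            (σ2 ^ 4 / (N2 : ℝ) ^ 2) * a ^ 2) /
          (T + (σ1 ^ 2 / (N1 : ℝ)) * a + (σ2 ^ 2 / (N2 : ℝ)) * a) ^ 2) +
      Δ ^ 2 * (σ1 ^ 4 / (N1 : ℝ) ^ 2) * a ^ 2 /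
        (T + (σ1 ^ 2 / (N1 : ℝ)) * a + (σ2 ^ 2 / (N2 : ℝ)) * a) ^ 2)
    (hΔ : Δ ^ 2 < 4 / a + σ1 ^ 2 / (N1 : ℝ) + σ2 ^ 2 / (N2 : ℝ)) :
    M1 < σ1 ^ 2 / (N1 : ℝ) := by
  have hN1' : (0 : ℝ) < N1 := by exact_mod_cast hN1
  have hN2' : (0 : ℝ) < N2 := by exact_mod_cast hN2
  have hu : 0 < σ1 ^ 2 / (N1 : ℝ) := div_pos hσ1 hN1'
  have hv : 0 < σ2 ^ 2 / (N2 : ℝ) := div_pos hσ2 hN2'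
  have huv : σ1 ^ 2 * σ2 ^ 2 / ((N1 : ℝ) * N2) = σ1 ^ 2 / N1 * (σ2 ^ 2 / N2) :=
    (div_mul_div_comm _ _ _ _).symm
  have hu2 : σ1 ^ 4 / (N1 : ℝ) ^ 2 = (σ1 ^ 2 / N1) ^ 2 := by rw [div_pow, ← pow_mul]
  have hv2 : σ2 ^ 4 / (N2 : ℝ) ^ 2 = (σ2 ^ 2 / N2) ^ 2 := by rw [div_pow, ← pow_mul]
  rw [hM1, hT, huv, hu2, hv2, mta_two_task_mse_eq_sub ha hu hv]
  have hgap := sub_pos.mpr hΔ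
  exact sub_lt_self _ (by positivity)
end

section
/- Let T = 2, σ_1², σ_2² > 0, N_1, N_2 ≥ 1, and Δ ≠ 0. For a ≥ 0 define M_1(a) = (σ_1²/N_1)·[T² + 2T(σ_2²/N_2)a + (σ_1²σ_2²/(N_1N_2))a² + (σ_2⁴/N_2²)a²]/(T + (σ_1²/N_1)a + (σ_2²/N_2)a)² + Δ²(σ_1⁴/N_1²)a²/(T + (σ_1²/N_1)a + (σ_2²/N_2)a)², and symmetrically M_2(a) with the roles of (σ_1², N_1) and (σ_2², N_2) interchanged, and define the risk R(a) = M_1(a) + M_2(a). Then a* = 2/Δ² minimizes R over a ∈ [0, ∞), and moreover a* = 2/Δ² also minimizes M_1 and M_2 separately. In particular the optimal task-similarity is independent of σ_1², σ_2², N_1, N_2. -/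
/-- The mean squared error, at task-similarity `a`, of the two-task estimate of the task with
sample-mean variance `s`, when the other task has sample-mean variance `t` and the squared mean
difference is `D`. -/
noncomputable def taskMSE (T s t D a : ℝ) : ℝ :=
  s * ((T ^ 2 + 2 * T * t * a + s * t * a ^ 2 + t ^ 2 * a ^ 2) / (T + s * a + t * a) ^ 2) +
    D * s ^ 2 * a ^ 2 / (T + s * a + t * a) ^ 2

/-- Completing the square in the weight `s * a / (T + s * a + t * a)`. -/
lemma taskMSE_eq_add_sq {T s t D a : ℝ} (hd : T + s * a + t * a ≠ 0) (hD : s + t + D ≠ 0) :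
    taskMSE T s t D a = s - s ^ 2 / (s + t + D) +
      (s * (a * D - T) / (T + s * a + t * a)) ^ 2 / (s + t + D) := by
  unfold taskMSE
  field_simp
  ring

lemma taskMSE_div_le {T s t D a : ℝ} (hT : 0 < T) (hs : 0 ≤ s) (ht : 0 ≤ t) (hD : 0 < D)
    (ha : 0 ≤ a) : taskMSE T s t D (T / D) ≤ taskMSE T s t D a := by
  rw [taskMSE_eq_add_sq (by positivity) (by positivity),
    taskMSE_eq_add_sq (by positivity) (by positivity), div_mul_cancel₀ T hD.ne', sub_self,
    mul_zero, zero_div, zero_pow two_ne_zero, zero_div]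
  gcongr
  positivity

/-- The task-similarity `a* = 2/Δ²` minimizes the two-task risk
`R(a) = M₁(a) + M₂(a)` over `a ∈ [0, ∞)`, and moreover it also minimizes
`M₁` and `M₂` separately (in particular the optimal similarity does not depend
on `σ₁², σ₂², N₁, N₂`). -/
theorem mta_two_task_optimal_similarity
    (σ1 σ2 : ℝ) (hσ1 : 0 < σ1 ^ 2) (hσ2 : 0 < σ2 ^ 2)
    (N1 N2 : ℕ) (hN1 : 1 ≤ N1) (hN2 : 1 ≤ N2)
    (Δ : ℝ) (hΔ : Δ ≠ 0) (T : ℝ) (hT : T = 2)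
    (M1 M2 R : ℝ → ℝ)
    (hM1 : M1 = fun a =>
      (σ1 ^ 2 / (N1 : ℝ)) *
        ((T ^ 2 + 2 * T * (σ2 ^ 2 / (N2 : ℝ)) * a +
            (σ1 ^ 2 * σ2 ^ 2 / ((N1 : ℝ) * (N2 : ℝ))) * a ^ 2 +
            (σ2 ^ 4 / (N2 : ℝ) ^ 2) * a ^ 2) /
          (T + (σ1 ^ 2 / (N1 : ℝ)) * a + (σ2 ^ 2 / (N2 : ℝ)) * a) ^ 2) +
      Δ ^ 2 * (σ1 ^ 4 / (N1 : ℝ) ^ 2) * a ^ 2 /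
        (T + (σ1 ^ 2 / (N1 : ℝ)) * a + (σ2 ^ 2 / (N2 : ℝ)) * a) ^ 2)
    (hM2 : M2 = fun a =>
      (σ2 ^ 2 / (N2 : ℝ)) *
        ((T ^ 2 + 2 * T * (σ1 ^ 2 / (N1 : ℝ)) * a +
            (σ2 ^ 2 * σ1 ^ 2 / ((N2 : ℝ) * (N1 : ℝ))) * a ^ 2 +
            (σ1 ^ 4 / (N1 : ℝ) ^ 2) * a ^ 2) /
          (T + (σ2 ^ 2 / (N2 : ℝ)) * a + (σ1 ^ 2 / (N1 : ℝ)) * a) ^ 2) +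
      Δ ^ 2 * (σ2 ^ 4 / (N2 : ℝ) ^ 2) * a ^ 2 /
        (T + (σ2 ^ 2 / (N2 : ℝ)) * a + (σ1 ^ 2 / (N1 : ℝ)) * a) ^ 2)
    (hR : R = fun a => M1 a + M2 a) :
    (∀ a, 0 ≤ a → R (2 / Δ ^ 2) ≤ R a) ∧
    (∀ a, 0 ≤ a → M1 (2 / Δ ^ 2) ≤ M1 a) ∧
    (∀ a, 0 ≤ a → M2 (2 / Δ ^ 2) ≤ M2 a) := by
  subst hT
  have h1 : M1 = taskMSE 2 (σ1 ^ 2 / N1) (σ2 ^ 2 / N2) (Δ ^ 2) := by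
    rw [hM1]
    funext a
    unfold taskMSE
    ring
  have h2 : M2 = taskMSE 2 (σ2 ^ 2 / N2) (σ1 ^ 2 / N1) (Δ ^ 2) := by
    rw [hM2]
    funext a
    unfold taskMSE
    ring
  have hM1_min : ∀ a, 0 ≤ a → M1 (2 / Δ ^ 2) ≤ M1 a := fun a ha => by
    rw [h1]
    exact taskMSE_div_le two_pos (by positivity) (by positivity) (by positivity) ha
  have hM2_min : ∀ a, 0 ≤ a → M2 (2 / Δ ^ 2) ≤ M2 a := fun a ha => by
    rw [h2]
    exact taskMSE_div_le two_pos (by positivity) (by positivity) (by positivity) ha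
  refine ⟨fun a ha => ?_, hM1_min, hM2_min⟩
  rw [hR]
  exact add_le_add (hM1_min a ha) (hM2_min a ha)
end

section
/- Let T ≥ 1, let γ satisfy 0 < 1/γ ≤ 1, and let α ∈ ℝ^T satisfy α_r ≥ 0 for all r and Σ_{r=1}^T α_r = 1 − 1/γ. Then the matrix (1/γ) I + 𝟙 αᵀ is invertible and ((1/γ) I + 𝟙 αᵀ)⁻¹ = I + γ L(𝟙 αᵀ), where 𝟙 is the all-ones vector in ℝ^T and L(𝟙 αᵀ) is the graph Laplacian of the rank-one matrix 𝟙 αᵀ. Consequently, every estimator of the form Ŷ_t = (1/γ) Ȳ_t + Σ_{r=1}^T α_r Ȳ_r can be written as Ŷ = (I + Γ L(A))⁻¹ Ȳ with Γ = γ I and A = 𝟙 αᵀ a matrix with nonnegative entries, i.e. it is of MTA form. -/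
open Matrix BigOperators

/-- The Laplacian of `𝟙αᵀ` is `(∑ α_r) I − 𝟙αᵀ`. -/
theorem graphLaplacian_vecMulVec_one {T : ℕ} (α : Fin T → ℝ) :
    graphLaplacian (Matrix.vecMulVec (fun _ => (1 : ℝ)) α) =
      (∑ r, α r) • (1 : Matrix (Fin T) (Fin T) ℝ) - Matrix.vecMulVec (fun _ => (1 : ℝ)) α := by
  simp [graphLaplacian, Matrix.vecMulVec_apply, Matrix.smul_one_eq_diagonal]

theorem vecMulVec_one_mul_self {T : ℕ} (α : Fin T → ℝ) :
    Matrix.vecMulVec (fun _ : Fin T => (1 : ℝ)) α * Matrix.vecMulVec (fun _ => (1 : ℝ)) α =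
      (∑ r, α r) • Matrix.vecMulVec (fun _ => (1 : ℝ)) α := by
  ext i j
  simp [Matrix.mul_apply, Matrix.vecMulVec_apply, Finset.sum_mul]

theorem smul_one_add_vecMulVec_mul_one_add_smul_graphLaplacian {T : ℕ} {γ : ℝ} (hγ : γ ≠ 0)
    {α : Fin T → ℝ} (hα : ∑ r, α r = 1 - 1 / γ) :
    ((1 / γ) • (1 : Matrix (Fin T) (Fin T) ℝ) + Matrix.vecMulVec (fun _ => (1 : ℝ)) α) *
      (1 + γ • graphLaplacian (Matrix.vecMulVec (fun _ => (1 : ℝ)) α)) = 1 := by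
  have hsq := vecMulVec_one_mul_self α
  rw [graphLaplacian_vecMulVec_one, hα]
  rw [hα] at hsq
  generalize Matrix.vecMulVec (fun _ : Fin T => (1 : ℝ)) α = J at hsq ⊢
  simp only [add_mul, mul_add, mul_sub, smul_mul_assoc, mul_smul_comm, one_mul, mul_one, hsq]
  match_scalars <;> field_simp <;> ring

/-- For `0 < 1/γ ≤ 1` and nonnegative `α` with `∑ α_r = 1 − 1/γ`, the matrix
`(1/γ)I + 𝟙αᵀ` is invertible with inverse `I + γ L(𝟙αᵀ)`; consequently every
estimator `Ŷ_t = (1/γ) Ȳ_t + ∑ r, α_r Ȳ_r` is of MTA form with `Γ = γ I` and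
`A = 𝟙αᵀ`. -/
theorem convex_regularized_estimator_is_mta_form (T : ℕ) (hT : 1 ≤ T)
    (γ : ℝ) (hγpos : 0 < 1 / γ) (hγle : 1 / γ ≤ 1)
    (α : Fin T → ℝ) (hα : ∀ r, 0 ≤ α r) (hαsum : ∑ r, α r = 1 - 1 / γ) :
    IsUnit ((1 / γ) • (1 : Matrix (Fin T) (Fin T) ℝ) +
      Matrix.vecMulVec (fun _ => (1 : ℝ)) α) ∧
    ((1 / γ) • (1 : Matrix (Fin T) (Fin T) ℝ) +
        Matrix.vecMulVec (fun _ => (1 : ℝ)) α)⁻¹ =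
      1 + γ • graphLaplacian (Matrix.vecMulVec (fun _ => (1 : ℝ)) α) ∧
    ∀ Ybar : Fin T → ℝ,
      (fun t => (1 / γ) * Ybar t + ∑ r, α r * Ybar r) =
        ((1 + (Matrix.diagonal fun _ : Fin T => γ) *
            graphLaplacian (Matrix.vecMulVec (fun _ => (1 : ℝ)) α))⁻¹).mulVec Ybar := by
  have hγ : γ ≠ 0 := by
    rintro rfl
    simp at hγpos
  have hmul := smul_one_add_vecMulVec_mul_one_add_smul_graphLaplacian hγ hαsum
  refine ⟨IsUnit.of_mul_eq_one _ hmul, Matrix.inv_eq_right_inv hmul, fun Ybar => ?_⟩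
  rw [← Matrix.smul_eq_diagonal_mul, Matrix.inv_eq_left_inv hmul]
  ext t
  rw [Matrix.add_mulVec, Matrix.smul_mulVec, Matrix.one_mulVec]
  simp [Matrix.mulVec, dotProduct, Matrix.vecMulVec_apply]
end

section
/- Let T ≥ 1 and λ ∈ (0, 1]. Then the estimator that shrinks each sample average toward the average of the sample averages, Ŷ_t = λ ȳ_t + ((1−λ)/T) Σ_{r=1}^T ȳ_r, satisfies Ŷ = (I + ((1−λ)/(λT)) L(𝟙𝟙ᵀ))⁻¹ ȳ, where 𝟙 is the all-ones vector in ℝ^T and L(𝟙𝟙ᵀ) = T I − 𝟙𝟙ᵀ is the graph Laplacian of the all-ones matrix; in particular this estimator is of MTA form. -/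
open Matrix BigOperators

theorem graphLaplacian_ones (T : ℕ) :
    graphLaplacian (vecMulVec (fun _ : Fin T => (1 : ℝ)) (fun _ => (1 : ℝ))) =
      (T : ℝ) • (1 : Matrix (Fin T) (Fin T) ℝ) - vecMulVec (fun _ => 1) (fun _ => 1) := by
  simp [graphLaplacian, vecMulVec_apply, smul_one_eq_diagonal]

theorem vecMulVec_ones_mul_self (T : ℕ) :
    vecMulVec (fun _ : Fin T => (1 : ℝ)) (fun _ : Fin T => (1 : ℝ)) *
        vecMulVec (fun _ : Fin T => (1 : ℝ)) (fun _ : Fin T => (1 : ℝ)) =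
      (T : ℝ) • vecMulVec (fun _ => 1) (fun _ => 1) := by
  ext i j
  simp [mul_apply, vecMulVec_apply]

theorem inv_one_add_smul_graphLaplacian_ones {T : ℕ} (hT : (T : ℝ) ≠ 0) {lam : ℝ}
    (hlam : lam ≠ 0) :
    (1 + ((1 - lam) / (lam * (T : ℝ))) •
        graphLaplacian (vecMulVec (fun _ : Fin T => (1 : ℝ)) (fun _ => (1 : ℝ))))⁻¹ =
      lam • (1 : Matrix (Fin T) (Fin T) ℝ) +
        ((1 - lam) / (T : ℝ)) • vecMulVec (fun _ => 1) (fun _ => 1) := by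
  apply inv_eq_right_inv
  rw [graphLaplacian_ones]
  have hJ := vecMulVec_ones_mul_self T
  generalize vecMulVec (fun _ : Fin T => (1 : ℝ)) (fun _ : Fin T => (1 : ℝ)) = J at hJ ⊢
  simp only [add_mul, mul_add, sub_mul, smul_mul_assoc, mul_smul_comm, one_mul, mul_one, hJ]
  match_scalars <;> field_simp <;> ring

/-- Shrinkage toward the average of the sample averages is of MTA form:
`Ŷ_t = λ ȳ_t + ((1−λ)/T) ∑ r, ȳ_r` satisfies
`Ŷ = (I + ((1−λ)/(λT)) L(𝟙𝟙ᵀ))⁻¹ ȳ`. -/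
theorem shrinkage_to_average_of_means_is_mta_form (T : ℕ) (hT : 1 ≤ T)
    (lam : ℝ) (hlam0 : 0 < lam) (hlam1 : lam ≤ 1)
    (ybar : Fin T → ℝ)
    (Yhat : Fin T → ℝ)
    (hYhat : Yhat = fun t =>
      lam * ybar t + ((1 - lam) / (T : ℝ)) * ∑ r, ybar r) :
    Yhat = ((1 + ((1 - lam) / (lam * (T : ℝ))) •
      graphLaplacian (Matrix.vecMulVec (fun _ => (1 : ℝ)) (fun _ => (1 : ℝ))))⁻¹).mulVec
        ybar := by
  have hT0 : (T : ℝ) ≠ 0 := Nat.cast_ne_zero.mpr (Nat.one_le_iff_ne_zero.mp hT)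
  rw [hYhat, inv_one_add_smul_graphLaplacian_ones hT0 hlam0.ne']
  ext t
  rw [add_mulVec, smul_mulVec, smul_mulVec, one_mulVec]
  simp [mulVec, dotProduct, vecMulVec_apply]
end

section
/- Let T ≥ 2, let c > 0 (c = tr(Σ)/T for a positive diagonal covariance Σ), and let μ ∈ ℝ^T be non-constant (so that μᵀ L((1/T)𝟙𝟙ᵀ) μ > 0). Define the risk R(a) = [c/(ac+1)²]·(T + 2ac + (ac)²) + [(ac)²/(ac+1)²] · μᵀ L((1/T)𝟙𝟙ᵀ) μ for a ≥ 0. Then R is uniquely minimized over a ∈ [0, ∞) at a* = (T−1)/(μᵀ L((1/T)𝟙𝟙ᵀ) μ), and moreover a* = 2 / [(1/(T(T−1))) Σ_{r=1}^T Σ_{s=1}^T (μ_r − μ_s)²], which reduces to 2/Δ² when T = 2 and Δ = μ_1 − μ_2. -/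
open Matrix BigOperators

/-- The Laplacian quadratic form of the averaging matrix is a sum of squared differences. -/
theorem dotProduct_graphLaplacian_average {T : ℕ} (hT : T ≠ 0) (μ : Fin T → ℝ) :
    μ ⬝ᵥ (graphLaplacian
      ((1 / (T : ℝ)) • Matrix.vecMulVec (fun _ => (1 : ℝ)) (fun _ => (1 : ℝ)))).mulVec μ =
      1 / (2 * (T : ℝ)) * ∑ r, ∑ s, (μ r - μ s) ^ 2 := by
  have hT' : (T : ℝ) ≠ 0 := Nat.cast_ne_zero.mpr hT
  have hL : μ ⬝ᵥ (graphLaplacian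
      ((1 / (T : ℝ)) • Matrix.vecMulVec (fun _ => (1 : ℝ)) (fun _ => (1 : ℝ)))).mulVec μ =
      ∑ r, μ r ^ 2 - 1 / (T : ℝ) * (∑ r, μ r) ^ 2 := by
    have hrow (r : Fin T) : (graphLaplacian
        ((1 / (T : ℝ)) • Matrix.vecMulVec (fun _ => (1 : ℝ)) (fun _ => (1 : ℝ)))).mulVec μ r =
        μ r - 1 / (T : ℝ) * ∑ s, μ s := by
      rw [graphLaplacian, Matrix.sub_mulVec, Pi.sub_apply, Matrix.mulVec_diagonal]
      simp [Matrix.mulVec, dotProduct, Matrix.vecMulVec_apply, Finset.mul_sum, hT']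
    simp only [dotProduct, hrow, mul_sub, Finset.sum_sub_distrib, ← Finset.sum_mul]
    simp only [← sq]
    ring
  have hS : ∑ r, ∑ s, (μ r - μ s) ^ 2 = 2 * T * ∑ r, μ r ^ 2 - 2 * (∑ r, μ r) ^ 2 := by
    simp only [sub_sq, Finset.sum_add_distrib, Finset.sum_sub_distrib, ← Finset.mul_sum,
      ← Finset.sum_mul, Finset.sum_const, Finset.card_univ, Fintype.card_fin, nsmul_eq_mul]
    ring
  rw [hL, hS]
  field_simp

/-- The sum of squared differences of a non-constant vector is positive. -/
theorem sum_sq_sub_pos {ι : Type*} [Fintype ι] {μ : ι → ℝ} (hμ : ∃ r s, μ r ≠ μ s) :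
    0 < ∑ r, ∑ s, (μ r - μ s) ^ 2 := by
  obtain ⟨r, s, hrs⟩ := hμ
  refine Finset.sum_pos' (fun _ _ => Finset.sum_nonneg fun _ _ => sq_nonneg _)
    ⟨r, Finset.mem_univ r, ?_⟩
  exact Finset.sum_pos' (fun _ _ => sq_nonneg _)
    ⟨s, Finset.mem_univ s, sq_pos_of_ne_zero (sub_ne_zero.mpr hrs)⟩

/-- The constant-similarity risk
`R(a) = (c/(ac+1)²)(T + 2ac + (ac)²) + ((ac)²/(ac+1)²) μᵀL((1/T)𝟙𝟙ᵀ)μ`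
is uniquely minimized over `a ∈ [0,∞)` at `a* = (T−1)/(μᵀL((1/T)𝟙𝟙ᵀ)μ)`, and
`a* = 2/((1/(T(T−1))) ∑ᵣ∑ₛ (μᵣ−μₛ)²)` (which is `2/Δ²` when `T = 2`). -/
theorem constant_mta_optimal_similarity (T : ℕ) (hT : 2 ≤ T)
    (c : ℝ) (hc : 0 < c)
    (μ : Fin T → ℝ) (hμ : ∃ r s, μ r ≠ μ s)
    (Q : ℝ)
    (hQ : Q = μ ⬝ᵥ (graphLaplacian
      ((1 / (T : ℝ)) • Matrix.vecMulVec (fun _ => (1 : ℝ)) (fun _ => (1 : ℝ)))).mulVec μ)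
    (R : ℝ → ℝ)
    (hR : R = fun a =>
      (c / (a * c + 1) ^ 2) * ((T : ℝ) + 2 * a * c + (a * c) ^ 2) +
        ((a * c) ^ 2 / (a * c + 1) ^ 2) * Q)
    (aStar : ℝ) (haStar : aStar = ((T : ℝ) - 1) / Q) :
    (∀ a, 0 ≤ a → a ≠ aStar → R aStar < R a) ∧
    aStar = 2 / ((1 / ((T : ℝ) * ((T : ℝ) - 1))) * ∑ r, ∑ s, (μ r - μ s) ^ 2) := by
  have hT' : (2 : ℝ) ≤ T := by exact_mod_cast hT
  have hS := sum_sq_sub_pos hμ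
  rw [dotProduct_graphLaplacian_average (by omega)] at hQ
  have hQpos : 0 < Q := by rw [hQ]; positivity
  have hTsub : (0 : ℝ) < T - 1 := by linarith
  constructor
  · intro a ha hne
    have hx : 0 < aStar := by rw [haStar]; positivity
    have hTQ : (T : ℝ) = aStar * Q + 1 := by rw [haStar]; field_simp; ring
    have hgap : R a - R aStar =
        Q * c ^ 2 * (aStar - a) ^ 2 / ((aStar * c + 1) * (a * c + 1) ^ 2) := by
      have h₁ : a * c + 1 ≠ 0 := by positivity
      have h₂ : aStar * c + 1 ≠ 0 := by positivity
      rw [hR, hTQ]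
      field_simp
      ring
    have hsq : 0 < (aStar - a) ^ 2 := sq_pos_of_ne_zero (sub_ne_zero.mpr hne.symm)
    have : 0 < R a - R aStar := by rw [hgap]; positivity
    linarith
  · rw [haStar, hQ]
    field_simp
end
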